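/- Let I be a *-super homogeneous ideal of D with M = M(I), and let J be a *-super homogeneous ideal of D with J ⊆ M. Then: (a) I ⊆ J* or J ⊆ I*; (b) (IJ)* is a *-super homogeneous ideal. -/

import Mathlib

/-!
Fractional `*`-ideals of finite type form an idempotent semiring under `(A + B)*` and `(AB)*`,
ordered by inclusion and with `D` as its unit element. Finite character makes the inverse of a
`*`-invertible ideal of finite type again of finite type, so the `*`-invertible ones are exactly
the units. In such a semiring let `h` be super homogeneous and `k` homogeneous, with `h + k ≠ 1`.
Then `u = h + k` is a unit with `h / u + k / u = 1`, and homogeneity forces `h / u = 1` or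
`k / u = 1`, that is, `k ≤ h` or `h ≤ k`. The product `h * k` is homogeneous because
`h + (k + a) = 1` with `h * k ≤ a` gives `h + a = k + a = 1`, whence `1 = (h + a) * (k + a) ≤ a`.
If `k` is super homogeneous too and `h * k ≤ a ≤ 1`, then comparing `a` with `h` through the unit
`a + h` shows that either `a` is a unit, or `a ≤ h` and `k ≤ a / h ≤ 1` is one.
-/

open scoped nonZeroDivisors

/-- A star operation on the nonzero fractional ideals of an integral domain `D`
with quotient field `K`: it fixes nonzero principal fractional ideals, commutes with
multiplication by nonzero principal fractional ideals, is extensive, monotone and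
idempotent (on nonzero fractional ideals). -/
structure StarOperation (D K : Type*) [CommRing D] [IsDomain D] [Field K]
    [Algebra D K] [IsFractionRing D K] where
  star : FractionalIdeal D⁰ K → FractionalIdeal D⁰ K
  star_spanSingleton : ∀ x : K, x ≠ 0 →
    star (FractionalIdeal.spanSingleton D⁰ x) = FractionalIdeal.spanSingleton D⁰ x
  star_smul : ∀ (x : K) (I : FractionalIdeal D⁰ K), x ≠ 0 → I ≠ 0 →
    star (FractionalIdeal.spanSingleton D⁰ x * I) = FractionalIdeal.spanSingleton D⁰ x * star I
  le_star : ∀ I : FractionalIdeal D⁰ K, I ≠ 0 → I ≤ star I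
  star_mono : ∀ I J : FractionalIdeal D⁰ K, I ≠ 0 → J ≠ 0 → I ≤ J → star I ≤ star J
  star_idem : ∀ I : FractionalIdeal D⁰ K, I ≠ 0 → star (star I) = star I

namespace StarOperation

variable {D K : Type*} [CommRing D] [IsDomain D] [Field K] [Algebra D K] [IsFractionRing D K]
variable (s : StarOperation D K)

/-- `*` has finite character: for every nonzero fractional ideal `I`, `I^*` is the union
of `J^*` over the nonzero finitely generated fractional subideals `J` of `I`. -/
def FiniteCharacter : Prop :=
  ∀ I : FractionalIdeal D⁰ K, I ≠ 0 → ∀ x ∈ s.star I,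
    ∃ J : FractionalIdeal D⁰ K, J ≠ 0 ∧ (J : Submodule D K).FG ∧ J ≤ I ∧ x ∈ s.star J

/-- A (nonzero) integral ideal `I` of `D` is a `*`-ideal if `I^* = I`. -/
def IsStarIdeal (I : Ideal D) : Prop :=
  I ≠ ⊥ ∧ s.star (I : FractionalIdeal D⁰ K) = (I : FractionalIdeal D⁰ K)

/-- An integral ideal `I` of `D` is a `*`-ideal of finite type if `I = J^*` for some
nonzero finitely generated ideal `J`. -/
def IsFiniteTypeStarIdeal (I : Ideal D) : Prop :=
  ∃ J : Ideal D, J ≠ ⊥ ∧ J.FG ∧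
    s.star (J : FractionalIdeal D⁰ K) = (I : FractionalIdeal D⁰ K)

/-- A maximal `*`-ideal: maximal among proper integral `*`-ideals. -/
def IsMaxStarIdeal (M : Ideal D) : Prop :=
  M ≠ ⊤ ∧ s.IsStarIdeal M ∧ ∀ J : Ideal D, J ≠ ⊤ → s.IsStarIdeal J → M ≤ J → J = M

/-- `I` is `*`-homogeneous: a proper `*`-ideal of finite type such that `(J + J')^* ≠ D`
for every pair `J`, `J'` of proper `*`-ideals of finite type containing `I`. -/
def IsHomog (I : Ideal D) : Prop :=
  I ≠ ⊤ ∧ s.IsStarIdeal I ∧ s.IsFiniteTypeStarIdeal I ∧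
    ∀ J J' : Ideal D, J ≠ ⊤ → J' ≠ ⊤ → s.IsStarIdeal J → s.IsStarIdeal J' →
      s.IsFiniteTypeStarIdeal J → s.IsFiniteTypeStarIdeal J' → I ≤ J → I ≤ J' →
      s.star ((J + J' : Ideal D) : FractionalIdeal D⁰ K) ≠ 1

/-- The set `M(I) = {x ∈ D : (xD + I)^* ≠ D}` attached to an ideal `I`. -/
def MSet (I : Ideal D) : Set D :=
  {x : D | s.star ((Ideal.span {x} + I : Ideal D) : FractionalIdeal D⁰ K) ≠ 1}

/-- `A` and `B` are `*`-comaximal if `(A + B)^* = D`. -/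
def StarComaximal (A B : Ideal D) : Prop :=
  s.star ((A + B : Ideal D) : FractionalIdeal D⁰ K) = 1

/-- An integral ideal `I` is `*`-invertible if `(I · I⁻¹)^* = D`. -/
def StarInvertible (I : Ideal D) : Prop :=
  s.star ((I : FractionalIdeal D⁰ K) * (I : FractionalIdeal D⁰ K)⁻¹) = 1

/-- `D` is a `*`-SH domain: every principal ideal generated by a nonzero nonunit is a
`*`-product of finitely many `*`-homogeneous ideals. -/
def IsSHDomain : Prop :=
  ∀ x : D, x ≠ 0 → ¬IsUnit x →
    ∃ T : Multiset (Ideal D), (∀ J ∈ T, s.IsHomog J) ∧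
      s.star ((T.prod : Ideal D) : FractionalIdeal D⁰ K) =
        ((Ideal.span {x} : Ideal D) : FractionalIdeal D⁰ K)

/-- `D` has finite `*`-character: every nonzero nonunit lies in only finitely many
maximal `*`-ideals. -/
def FiniteStarCharacter : Prop :=
  ∀ x : D, x ≠ 0 → ¬IsUnit x → {P : Ideal D | s.IsMaxStarIdeal P ∧ x ∈ P}.Finite

end StarOperation

namespace StarOperation

variable {D K : Type*} [CommRing D] [IsDomain D] [Field K] [Algebra D K] [IsFractionRing D K]

/-- A `*`-homogeneous ideal `I` is `*`-super homogeneous if every `*`-ideal of finite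
type containing `I` is `*`-invertible. -/
def IsSuperHomog (s : StarOperation D K) (I : Ideal D) : Prop :=
  s.IsHomog I ∧ ∀ J : Ideal D, s.IsStarIdeal J → s.IsFiniteTypeStarIdeal J → I ≤ J →
    s.StarInvertible J

end StarOperation

section IdemSemiring

variable {R : Type*} [IdemSemiring R] {a b h k : R}

/-- The abstract form of `*`-homogeneity. In the semiring of fractional `*`-ideals of finite type
below, `a + b = 1` means that `a` and `b` are `*`-comaximal. -/
structure IsHomogElem (h : R) : Prop where
  lt_one : h < 1
  eq_one_or_eq_one : ∀ a b, h ≤ a → h ≤ b → a + b = 1 → a = 1 ∨ b = 1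

/-- The abstract form of `*`-super homogeneity: units play the role of `*`-invertible ideals. -/
structure IsSuperHomogElem (h : R) : Prop extends IsHomogElem h where
  isUnit : ∀ a, h ≤ a → a ≤ 1 → IsUnit a

theorem le_mul_units_inv_of_le_one {u : Rˣ} (hu : (u : R) ≤ 1) (a : R) : a ≤ a * ↑u⁻¹ :=
  calc
    a = a * u * ↑u⁻¹ := (Units.mul_inv_cancel_right a u).symm
    _ ≤ a * ↑u⁻¹ := mul_le_mul_left (mul_le_of_le_one_right' hu) _

theorem add_mul_add_le_of_mul_le (hka : h * k ≤ a) (hk : k ≤ 1) (hha : h + a ≤ 1) :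
    (h + a) * (k + a) ≤ a := by
  rw [mul_add, add_mul]
  exact add_le (add_le hka (mul_le_of_le_one_right' hk)) (mul_le_of_le_one_left' hha)

namespace IsHomogElem

theorem add_add_ne_one (hh : IsHomogElem h) (ha : h + a ≠ 1) (hb : h + b ≠ 1) :
    h + (a + b) ≠ 1 := by
  intro hab
  have hsum : (h + a) + (h + b) = 1 := by rw [add_add_add_comm, add_idem, hab]
  exact (hh.eq_one_or_eq_one _ _ le_self_add le_self_add hsum).elim ha hb

theorem eq_one_of_add_add_eq_one (hh : IsHomogElem h) (hk : IsHomogElem k) (hhk : h + k ≠ 1)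
    (hka : h * k ≤ a) (ha : h + (k + a) = 1) : a = 1 := by
  have hha : h + a = 1 := by
    by_contra hne
    exact hh.add_add_ne_one hhk hne ha
  have hka' : k + a = 1 := by
    by_contra hne
    exact hk.add_add_ne_one (add_comm h k ▸ hhk) hne (add_left_comm h k a ▸ ha)
  refine le_antisymm (le_add_self.trans hha.le) ?_
  calc
    1 = (h + a) * (k + a) := by rw [hha, hka', one_mul]
    _ ≤ a := add_mul_add_le_of_mul_le hka hk.lt_one.le hha.le

theorem mul (hh : IsHomogElem h) (hk : IsHomogElem k) (hhk : h + k ≠ 1) :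
    IsHomogElem (h * k) where
  lt_one := (mul_le_of_le_one_right' hk.lt_one.le).trans_lt hh.lt_one
  eq_one_or_eq_one a b ha hb hab := by
    by_contra! hne
    have hka : h + (k + a) ≠ 1 := fun h1 ↦ hne.1 (hh.eq_one_of_add_add_eq_one hk hhk ha h1)
    have hkb : h + (k + b) ≠ 1 := fun h1 ↦ hne.2 (hh.eq_one_of_add_add_eq_one hk hhk hb h1)
    apply hh.add_add_ne_one hka hkb
    calc
      h + ((k + a) + (k + b)) = h + (k + 1) := by rw [add_add_add_comm, add_idem, hab]
      _ = 1 := by rw [add_eq_right_iff_le.2 hk.lt_one.le, add_eq_right_iff_le.2 hh.lt_one.le]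

end IsHomogElem

namespace IsSuperHomogElem

theorem le_or_le (hh : IsSuperHomogElem h) (hk : IsHomogElem k) (hhk : h + k ≠ 1) :
    h ≤ k ∨ k ≤ h := by
  have hc : h + k ≤ 1 := add_le hh.lt_one.le hk.lt_one.le
  obtain ⟨u, hu⟩ := hh.isUnit (h + k) le_self_add hc
  have le_mul_inv := le_mul_units_inv_of_le_one (hu.trans_le hc)
  have hsum : h * ↑u⁻¹ + k * ↑u⁻¹ = 1 := by rw [← add_mul, ← hu, Units.mul_inv]
  have hc_add : h * ↑u⁻¹ + (h + k + k * ↑u⁻¹) = 1 := by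
    rw [add_left_comm, hsum, add_eq_right_iff_le.2 hc]
  rcases hh.eq_one_or_eq_one _ _ (le_mul_inv h) (le_self_add.trans le_self_add) hc_add
    with hhu | hcu
  · right
    rw [Units.mul_inv_eq_one.1 hhu, hu]
    exact le_add_self
  · rcases hk.eq_one_or_eq_one _ _ le_add_self (le_mul_inv k) hcu with h1 | hku
    · exact absurd h1 hhk
    · left
      rw [Units.mul_inv_eq_one.1 hku, hu]
      exact le_self_add

theorem mul (hh : IsSuperHomogElem h) (hk : IsSuperHomogElem k) (hhk : h + k ≠ 1) :
    IsSuperHomogElem (h * k) where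
  toIsHomogElem := hh.toIsHomogElem.mul hk.toIsHomogElem hhk
  isUnit a hka ha := by
    have hc : a + h ≤ 1 := add_le ha hh.lt_one.le
    obtain ⟨u, hu⟩ := hh.isUnit (a + h) le_add_self hc
    have le_mul_inv := le_mul_units_inv_of_le_one (hu.trans_le hc)
    have hsum : a * ↑u⁻¹ + h * ↑u⁻¹ = 1 := by rw [← add_mul, ← hu, Units.mul_inv]
    have hkh : h * k ≤ h := mul_le_of_le_one_right' hk.lt_one.le
    rcases (hh.toIsHomogElem.mul hk.toIsHomogElem hhk).eq_one_or_eq_one _ _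
      (hka.trans (le_mul_inv a)) (hkh.trans (le_mul_inv h)) hsum with hau | hhu
    · exact Units.mul_inv_eq_one.1 hau ▸ u.isUnit
    have hah : a ≤ h := by
      rw [Units.mul_inv_eq_one.1 hhu, hu]
      exact le_self_add
    obtain ⟨v, rfl⟩ := hh.isUnit h le_rfl hh.lt_one.le
    have hk_le : k ≤ ↑v⁻¹ * a := by
      simpa only [Units.inv_mul_cancel_left] using mul_le_mul_right hka (↑v⁻¹ : R)
    have h_le_one : ↑v⁻¹ * a ≤ 1 := by
      simpa only [Units.inv_mul] using mul_le_mul_right hah (↑v⁻¹ : R)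
    simpa only [Units.isUnit_units_mul] using hk.isUnit _ hk_le h_le_one

end IsSuperHomogElem

end IdemSemiring

section FiniteGeneration

theorem exists_fg_le_of_fg_le_mul {R A : Type*} [CommSemiring R] [Semiring A] [Algebra R A]
    {P Q : Submodule R A} {G : Submodule R A} (hG : G.FG) (hGPQ : G ≤ P * Q) :
    ∃ N ≤ Q, N.FG ∧ G ≤ P * N := by
  induction G, hG using Submodule.fg_induction with
  | singleton x =>
    obtain ⟨S, T, hS, hT, hx⟩ := Submodule.mem_span_mul_finite_of_mem_mul
      (hGPQ (Submodule.mem_span_singleton_self x))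
    rw [← Submodule.span_mul_span] at hx
    exact ⟨Submodule.span R T, Submodule.span_le.2 hT, ⟨T, rfl⟩,
      (Submodule.span_singleton_le_iff_mem _ _).2
        (mul_le_mul_left (Submodule.span_le.2 hS) _ hx)⟩
  | sup G₁ G₂ _ _ ih₁ ih₂ =>
    obtain ⟨N₁, hNQ₁, hN₁, hGN₁⟩ := ih₁ (le_sup_left.trans hGPQ)
    obtain ⟨N₂, hNQ₂, hN₂, hGN₂⟩ := ih₂ (le_sup_right.trans hGPQ)
    exact ⟨N₁ ⊔ N₂, sup_le hNQ₁ hNQ₂, hN₁.sup hN₂,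
      sup_le (hGN₁.trans (mul_le_mul_right le_sup_left _))
        (hGN₂.trans (mul_le_mul_right le_sup_right _))⟩

/-- The semiring of finitely generated fractional ideals. It contains `0`, so that it is closed
under the semiring operations. -/
def fgFractionalIdeals {R : Type*} [CommRing R] (S : Submonoid R) (P : Type*) [CommRing P]
    [Algebra R P] : Subsemiring (FractionalIdeal S P) where
  carrier := {X | (X : Submodule R P).FG}
  zero_mem' := by
    rw [Set.mem_ofPred_eq, FractionalIdeal.coe_zero]
    exact Submodule.fg_bot
  one_mem' := by
    rw [Set.mem_ofPred_eq, FractionalIdeal.coe_one, Submodule.one_eq_span]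
    exact Submodule.fg_span_singleton 1
  add_mem' hX hY := by
    rw [Set.mem_ofPred_eq, FractionalIdeal.coe_add]
    exact hX.sup hY
  mul_mem' hX hY := by
    rw [Set.mem_ofPred_eq, FractionalIdeal.coe_mul]
    exact hX.mul hY

end FiniteGeneration

namespace StarOperation

variable {D K : Type*} [CommRing D] [IsDomain D] [Field K] [Algebra D K] [IsFractionRing D K]
variable (s : StarOperation D K) {X Y : FractionalIdeal D⁰ K}

open Classical in
/-- The star operation as a closure operator on all fractional ideals, extended by `0* = 0`: the
axioms of `StarOperation` do not constrain `s.star 0`. -/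
noncomputable def closure : ClosureOperator (FractionalIdeal D⁰ K) :=
  ClosureOperator.mk₂ (fun X ↦ if X = 0 then 0 else s.star X)
    (fun X ↦ by
      split_ifs with hX
      · exact hX.le
      · exact s.le_star X hX)
    (fun X Y h ↦ by
      split_ifs at h ⊢ with hX hY hY
      · exact le_rfl
      · exact zero_le
      · exact absurd (le_zero_iff.1 h) hX
      · have hsY : s.star Y ≠ 0 := fun h0 ↦ hY (le_zero_iff.1 ((s.le_star Y hY).trans h0.le))
        exact (s.star_mono X _ hX hsY h).trans (s.star_idem Y hY).le)

theorem closure_of_ne_zero (hX : X ≠ 0) : s.closure X = s.star X :=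
  if_neg hX

theorem closure_zero : s.closure 0 = 0 :=
  if_pos rfl

theorem closure_one : s.closure 1 = 1 := by
  rw [s.closure_of_ne_zero one_ne_zero]
  simpa only [FractionalIdeal.spanSingleton_one] using s.star_spanSingleton 1 one_ne_zero

theorem closure_le_one (hX : X ≤ 1) : s.closure X ≤ 1 :=
  (s.closure.monotone hX).trans s.closure_one.le

theorem closure_spanSingleton_mul (x : K) (X : FractionalIdeal D⁰ K) :
    s.closure (FractionalIdeal.spanSingleton D⁰ x * X) =
      FractionalIdeal.spanSingleton D⁰ x * s.closure X := by
  rcases eq_or_ne x 0 with rfl | hx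
  · rw [FractionalIdeal.spanSingleton_zero, zero_mul, zero_mul, closure_zero]
  rcases eq_or_ne X 0 with rfl | hX
  · rw [closure_zero, mul_zero, closure_zero]
  have hunit : IsUnit (FractionalIdeal.spanSingleton D⁰ x) :=
    .of_mul_eq_one _ (FractionalIdeal.spanSingleton_mul_inv K hx)
  rw [s.closure_of_ne_zero hX, s.closure_of_ne_zero fun h ↦ hX (hunit.mul_right_eq_zero.1 h),
    s.star_smul x X hx hX]

theorem mul_closure_le (X Y : FractionalIdeal D⁰ K) :
    X * s.closure Y ≤ s.closure (X * Y) := by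
  rw [FractionalIdeal.mul_le]
  intro x hx y hy
  have hxX : FractionalIdeal.spanSingleton D⁰ x ≤ X :=
    FractionalIdeal.spanSingleton_le_iff_mem.2 hx
  refine s.closure.monotone (mul_le_mul_left hxX Y) ?_
  rw [closure_spanSingleton_mul]
  exact FractionalIdeal.mul_mem_mul (FractionalIdeal.mem_spanSingleton_self _ x) hy

theorem closure_mul_closure (X Y : FractionalIdeal D⁰ K) :
    s.closure (s.closure X * s.closure Y) = s.closure (X * Y) := by
  refine le_antisymm ?_ (s.closure.monotone
    (mul_le_mul' (s.closure.le_closure X) (s.closure.le_closure Y)))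
  have hX : s.closure (s.closure X * Y) ≤ s.closure (X * Y) := by
    rw [← s.closure.le_closure_iff, mul_comm, mul_comm X]
    exact s.mul_closure_le Y X
  rw [← s.closure.le_closure_iff]
  exact (s.mul_closure_le _ Y).trans hX

theorem closure_add_closure (X Y : FractionalIdeal D⁰ K) :
    s.closure (s.closure X + s.closure Y) = s.closure (X + Y) := by
  simpa only [FractionalIdeal.sup_eq_add] using s.closure.closure_sup_closure X Y

/-- The congruence identifying finitely generated fractional ideals that have the same
`*`-closure. -/
noncomputable def starCon : RingCon (fgFractionalIdeals D⁰ K) where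
  toSetoid := Setoid.ker fun X ↦ s.closure (X : FractionalIdeal D⁰ K)
  mul' {W X Y Z} hWX hYZ := by
    rw [Setoid.ker_def] at *
    rw [Subsemiring.coe_mul, Subsemiring.coe_mul, ← closure_mul_closure, hWX, hYZ,
      closure_mul_closure]
  add' {W X Y Z} hWX hYZ := by
    rw [Setoid.ker_def] at *
    rw [Subsemiring.coe_add, Subsemiring.coe_add, ← closure_add_closure, hWX, hYZ,
      closure_add_closure]

/-- Fractional `*`-ideals of finite type (together with `0`), encoded as finitely generated
fractional ideals up to equality of `*`-closures, so that `*`-sum and `*`-product make them a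
semiring. -/
def FiniteTypeFractionalIdeal : Type _ :=
  s.starCon.Quotient

namespace FiniteTypeFractionalIdeal

noncomputable instance : CommSemiring s.FiniteTypeFractionalIdeal :=
  inferInstanceAs (CommSemiring s.starCon.Quotient)

variable {s}

/-- The class of a finitely generated fractional ideal, to be thought of as its `*`-closure. -/
noncomputable def mk : fgFractionalIdeals D⁰ K →+* s.FiniteTypeFractionalIdeal :=
  s.starCon.mk'

theorem mk_surjective : Function.Surjective (mk (s := s)) :=
  s.starCon.mk'_surjective

noncomputable instance : IdemCommSemiring s.FiniteTypeFractionalIdeal where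
  __ := (inferInstance : CommSemiring s.FiniteTypeFractionalIdeal)
  __ := IdemSemiring.ofSemiring fun a : s.FiniteTypeFractionalIdeal ↦ by
    obtain ⟨X, rfl⟩ := mk_surjective a
    rw [← map_add, show X + X = X from Subtype.ext (by
      rw [Subsemiring.coe_add, ← FractionalIdeal.sup_eq_add, sup_idem])]

/-- The common `*`-closure of the representatives. -/
@[coe]
noncomputable def toFractionalIdeal : s.FiniteTypeFractionalIdeal → FractionalIdeal D⁰ K :=
  Quotient.lift (fun X : fgFractionalIdeals D⁰ K ↦ s.closure X) fun _ _ h ↦ h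

noncomputable instance : CoeOut s.FiniteTypeFractionalIdeal (FractionalIdeal D⁰ K) :=
  ⟨toFractionalIdeal⟩

theorem exists_fg_closure_eq (a : s.FiniteTypeFractionalIdeal) :
    ∃ X : FractionalIdeal D⁰ K, (X : Submodule D K).FG ∧ s.closure X = a := by
  obtain ⟨⟨X, hX⟩, rfl⟩ := mk_surjective a
  exact ⟨X, hX, rfl⟩

variable {a b : s.FiniteTypeFractionalIdeal}

theorem coe_injective :
    Function.Injective ((↑) : s.FiniteTypeFractionalIdeal → FractionalIdeal D⁰ K) := by
  intro a b hab
  obtain ⟨X, rfl⟩ := mk_surjective a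
  obtain ⟨Y, rfl⟩ := mk_surjective b
  exact Quotient.sound hab

theorem coe_inj : (a : FractionalIdeal D⁰ K) = b ↔ a = b :=
  coe_injective.eq_iff

theorem closure_coe (a : s.FiniteTypeFractionalIdeal) :
    s.closure (a : FractionalIdeal D⁰ K) = a := by
  obtain ⟨X, rfl⟩ := mk_surjective a
  exact s.closure.idempotent X

theorem coe_one : ((1 : s.FiniteTypeFractionalIdeal) : FractionalIdeal D⁰ K) = 1 :=
  s.closure_one

theorem coe_add (a b : s.FiniteTypeFractionalIdeal) :
    ((a + b : s.FiniteTypeFractionalIdeal) : FractionalIdeal D⁰ K) =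
      s.closure (a + b : FractionalIdeal D⁰ K) := by
  obtain ⟨X, rfl⟩ := mk_surjective a
  obtain ⟨Y, rfl⟩ := mk_surjective b
  exact (s.closure_add_closure X Y).symm

theorem coe_mul (a b : s.FiniteTypeFractionalIdeal) :
    ((a * b : s.FiniteTypeFractionalIdeal) : FractionalIdeal D⁰ K) =
      s.closure (a * b : FractionalIdeal D⁰ K) := by
  obtain ⟨X, rfl⟩ := mk_surjective a
  obtain ⟨Y, rfl⟩ := mk_surjective b
  exact (s.closure_mul_closure X Y).symm

theorem coe_le_coe : (a : FractionalIdeal D⁰ K) ≤ b ↔ a ≤ b := by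
  rw [← add_eq_right_iff_le, ← coe_inj, coe_add, ← FractionalIdeal.sup_eq_add]
  constructor
  · intro hab
    rw [sup_eq_right.2 hab, closure_coe]
  · intro hab
    rw [← hab]
    exact le_sup_left.trans (s.closure.le_closure _)

theorem exists_coeIdeal_eq (ha : a ≤ 1) : ∃ A : Ideal D, (A : FractionalIdeal D⁰ K) = a := by
  rw [← coe_le_coe, coe_one] at ha
  exact FractionalIdeal.le_one_iff_exists_coeIdeal.1 ha

theorem exists_coe_eq_closure {A : Ideal D} (hA : A.FG) :
    ∃ a : s.FiniteTypeFractionalIdeal, (a : FractionalIdeal D⁰ K) = s.closure A :=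
  ⟨mk ⟨A, (FractionalIdeal.coeIdeal_fg D⁰ (IsFractionRing.injective D K) A).2 hA⟩, rfl⟩

theorem exists_coe_eq_closure_of_fg_le_mul {Q : FractionalIdeal D⁰ K}
    (hX : (X : Submodule D K).FG) (hle : X ≤ Y * Q) :
    ∃ b : s.FiniteTypeFractionalIdeal, ∃ N ≤ Q, (b : FractionalIdeal D⁰ K) = s.closure N ∧
      X ≤ Y * N := by
  rw [← FractionalIdeal.coe_le_coe, FractionalIdeal.coe_mul] at hle
  obtain ⟨N, hNQ, hN, hXN⟩ := exists_fg_le_of_fg_le_mul hX hle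
  let N' : FractionalIdeal D⁰ K := ⟨N, FractionalIdeal.isFractional_of_le hNQ⟩
  refine ⟨mk ⟨N', hN⟩, N', hNQ, rfl, ?_⟩
  rw [← FractionalIdeal.coe_le_coe, FractionalIdeal.coe_mul]
  exact hXN

theorem closure_mul_inv_eq_one_of_isUnit (ha0 : (a : FractionalIdeal D⁰ K) ≠ 0)
    (ha : IsUnit a) : s.closure (a * (a : FractionalIdeal D⁰ K)⁻¹) = 1 := by
  obtain ⟨b, hab⟩ := ha.exists_right_inv
  rw [← coe_inj, coe_mul, coe_one] at hab
  have hb : (b : FractionalIdeal D⁰ K) ≤ (a : FractionalIdeal D⁰ K)⁻¹ := by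
    rw [FractionalIdeal.inv_eq, FractionalIdeal.le_div_iff_mul_le ha0, mul_comm]
    exact (s.closure.le_closure _).trans hab.le
  refine le_antisymm (s.closure_le_one FractionalIdeal.mul_one_div_le_one) ?_
  exact hab.ge.trans (s.closure.monotone (mul_le_mul_right hb _))

theorem isUnit_of_closure_mul_inv_eq_one (hs : s.FiniteCharacter)
    (ha : s.closure (a * (a : FractionalIdeal D⁰ K)⁻¹) = 1) : IsUnit a := by
  have h0 : (a * (a : FractionalIdeal D⁰ K)⁻¹) ≠ 0 := by
    intro h0
    rw [h0, closure_zero] at ha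
    exact zero_ne_one ha
  obtain ⟨G, hG0, hG, hGle, h1⟩ := hs _ h0 1 (by
    rw [← s.closure_of_ne_zero h0, ha]
    exact FractionalIdeal.one_mem_one _)
  rw [← FractionalIdeal.one_le, ← s.closure_of_ne_zero hG0] at h1
  obtain ⟨b, N, hN, hbN, hGN⟩ := exists_coe_eq_closure_of_fg_le_mul (s := s) hG hGle
  have hab : ((a * b : s.FiniteTypeFractionalIdeal) : FractionalIdeal D⁰ K) =
      s.closure (a * N) := by
    rw [coe_mul, hbN, ← closure_coe a, closure_mul_closure, closure_coe]
  refine .of_mul_eq_one b (coe_inj.1 ?_)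
  rw [hab, coe_one]
  exact le_antisymm
    (s.closure_le_one ((mul_le_mul_right hN _).trans FractionalIdeal.mul_one_div_le_one))
    (h1.trans (s.closure.monotone hGN))

end FiniteTypeFractionalIdeal

open FiniteTypeFractionalIdeal

variable {s} {a b h k : s.FiniteTypeFractionalIdeal} {A B I J : Ideal D}

theorem isFiniteTypeStarIdeal_iff :
    s.IsFiniteTypeStarIdeal A ↔
      A ≠ ⊥ ∧ ∃ a : s.FiniteTypeFractionalIdeal, (a : FractionalIdeal D⁰ K) = A := by
  constructor
  · rintro ⟨G, hG0, hG, hGA⟩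
    have hG0' : (G : FractionalIdeal D⁰ K) ≠ 0 := FractionalIdeal.coeIdeal_ne_zero.2 hG0
    have hle : (G : FractionalIdeal D⁰ K) ≤ A := hGA ▸ s.le_star G hG0'
    refine ⟨ne_bot_of_le_ne_bot hG0 ((FractionalIdeal.coeIdeal_le_coeIdeal K).1 hle), ?_⟩
    rw [← hGA, ← s.closure_of_ne_zero hG0']
    exact exists_coe_eq_closure hG
  · rintro ⟨hA, a, haA⟩
    obtain ⟨X, hX, hXa⟩ := exists_fg_closure_eq a
    rw [← hXa] at haA
    have hX1 : X ≤ 1 :=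
      (s.closure.le_closure X).trans (haA.le.trans FractionalIdeal.coeIdeal_le_one)
    have hX0 : X ≠ 0 := by
      rintro rfl
      rw [closure_zero] at haA
      exact FractionalIdeal.coeIdeal_ne_zero.2 hA haA.symm
    obtain ⟨G, rfl⟩ := FractionalIdeal.le_one_iff_exists_coeIdeal.1 hX1
    exact ⟨G, FractionalIdeal.coeIdeal_ne_zero.1 hX0,
      (FractionalIdeal.coeIdeal_fg D⁰ (IsFractionRing.injective D K) G).1 hX,
      by rw [← s.closure_of_ne_zero hX0, haA]⟩

theorem IsFiniteTypeStarIdeal.isStarIdeal (hA : s.IsFiniteTypeStarIdeal A) : s.IsStarIdeal A := by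
  obtain ⟨hA0, a, haA⟩ := isFiniteTypeStarIdeal_iff.1 hA
  refine ⟨hA0, ?_⟩
  rw [← s.closure_of_ne_zero (FractionalIdeal.coeIdeal_ne_zero.2 hA0), ← haA, closure_coe]

theorem coe_eq_one_iff (haA : (a : FractionalIdeal D⁰ K) = A) : a = 1 ↔ A = ⊤ := by
  rw [← coe_inj, coe_one, haA, FractionalIdeal.coeIdeal_eq_one, Ideal.one_eq_top]

theorem le_iff_of_coe_eq (haA : (a : FractionalIdeal D⁰ K) = A)
    (hbB : (b : FractionalIdeal D⁰ K) = B) : a ≤ b ↔ A ≤ B := by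
  rw [← coe_le_coe, haA, hbB, FractionalIdeal.coeIdeal_le_coeIdeal K]

theorem le_one_of_coe_eq (haA : (a : FractionalIdeal D⁰ K) = A) : a ≤ 1 := by
  rw [← coe_le_coe, coe_one, haA]
  exact FractionalIdeal.coeIdeal_le_one

theorem exists_isFiniteTypeStarIdeal_of_le (hI : I ≠ ⊥) (hhI : (h : FractionalIdeal D⁰ K) = I)
    (hha : h ≤ a) (ha : a ≤ 1) :
    ∃ A : Ideal D, (a : FractionalIdeal D⁰ K) = A ∧ s.IsFiniteTypeStarIdeal A ∧ I ≤ A := by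
  obtain ⟨A, hAa⟩ := exists_coeIdeal_eq ha
  have hIA : I ≤ A := (le_iff_of_coe_eq hhI hAa.symm).1 hha
  exact ⟨A, hAa.symm,
    isFiniteTypeStarIdeal_iff.2 ⟨ne_bot_of_le_ne_bot hI hIA, a, hAa.symm⟩, hIA⟩

theorem star_add_eq_one_iff (hA : A ≠ ⊥) (haA : (a : FractionalIdeal D⁰ K) = s.closure A)
    (hbB : (b : FractionalIdeal D⁰ K) = s.closure B) :
    s.star ((A + B : Ideal D) : FractionalIdeal D⁰ K) = 1 ↔ a + b = 1 := by
  have hAB : ((A ⊔ B : Ideal D) : FractionalIdeal D⁰ K) ≠ 0 :=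
    FractionalIdeal.coeIdeal_ne_zero.2 (ne_bot_of_le_ne_bot hA le_sup_left)
  rw [← coe_inj, coe_one, coe_add, haA, hbB, closure_add_closure, ← FractionalIdeal.coeIdeal_sup,
    s.closure_of_ne_zero hAB, Submodule.add_eq_sup]

theorem isHomog_iff (hI : I ≠ ⊥) (hhI : (h : FractionalIdeal D⁰ K) = I) :
    s.IsHomog I ↔ IsHomogElem h := by
  have hfin : s.IsFiniteTypeStarIdeal I := isFiniteTypeStarIdeal_iff.2 ⟨hI, h, hhI⟩
  have star_add_iff {a b : s.FiniteTypeFractionalIdeal} {A B : Ideal D} (hA : A ≠ ⊥)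
      (haA : (a : FractionalIdeal D⁰ K) = A) (hbB : (b : FractionalIdeal D⁰ K) = B) :
      s.star ((A + B : Ideal D) : FractionalIdeal D⁰ K) = 1 ↔ a + b = 1 :=
    star_add_eq_one_iff hA (by rw [← haA, closure_coe]) (by rw [← hbB, closure_coe])
  constructor
  · rintro ⟨hI1, -, -, hhom⟩
    refine ⟨(le_one_of_coe_eq hhI).lt_of_ne fun h1 ↦ hI1 ((coe_eq_one_iff hhI).1 h1), ?_⟩
    intro a b ha hb hab
    obtain ⟨A, haA, hA, hIA⟩ :=
      exists_isFiniteTypeStarIdeal_of_le hI hhI ha (le_self_add.trans hab.le)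
    obtain ⟨B, hbB, hB, hIB⟩ :=
      exists_isFiniteTypeStarIdeal_of_le hI hhI hb (le_add_self.trans hab.le)
    rw [coe_eq_one_iff haA, coe_eq_one_iff hbB]
    by_contra! hne
    exact hhom A B hne.1 hne.2 hA.isStarIdeal hB.isStarIdeal hA hB hIA hIB
      ((star_add_iff hA.isStarIdeal.1 haA hbB).2 hab)
  · rintro ⟨hh1, hhom⟩
    refine ⟨fun hI1 ↦ hh1.ne ((coe_eq_one_iff hhI).2 hI1), hfin.isStarIdeal, hfin, ?_⟩
    intro A B hA1 hB1 _ _ hA hB hIA hIB hAB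
    obtain ⟨hA0, a, haA⟩ := isFiniteTypeStarIdeal_iff.1 hA
    obtain ⟨-, b, hbB⟩ := isFiniteTypeStarIdeal_iff.1 hB
    rcases hhom a b ((le_iff_of_coe_eq hhI haA).2 hIA) ((le_iff_of_coe_eq hhI hbB).2 hIB)
      ((star_add_iff hA0 haA hbB).1 hAB) with ha | hb
    · exact hA1 ((coe_eq_one_iff haA).1 ha)
    · exact hB1 ((coe_eq_one_iff hbB).1 hb)

theorem starInvertible_iff_isUnit (hs : s.FiniteCharacter) (hA : A ≠ ⊥)
    (haA : (a : FractionalIdeal D⁰ K) = A) : s.StarInvertible A ↔ IsUnit a := by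
  have hA0 : (A : FractionalIdeal D⁰ K) ≠ 0 := FractionalIdeal.coeIdeal_ne_zero.2 hA
  have h0 : (A : FractionalIdeal D⁰ K) * (A : FractionalIdeal D⁰ K)⁻¹ ≠ 0 := by
    intro h0
    exact hA0 (le_zero_iff.1 ((FractionalIdeal.coe_ideal_le_self_mul_inv K A).trans h0.le))
  rw [StarInvertible, ← s.closure_of_ne_zero h0, ← haA]
  exact ⟨isUnit_of_closure_mul_inv_eq_one hs, closure_mul_inv_eq_one_of_isUnit (haA ▸ hA0)⟩

theorem isSuperHomog_iff (hs : s.FiniteCharacter) (hI : I ≠ ⊥)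
    (hhI : (h : FractionalIdeal D⁰ K) = I) : s.IsSuperHomog I ↔ IsSuperHomogElem h := by
  constructor
  · rintro ⟨hhom, hinv⟩
    refine ⟨(isHomog_iff hI hhI).1 hhom, fun a ha ha1 ↦ ?_⟩
    obtain ⟨A, haA, hA, hIA⟩ := exists_isFiniteTypeStarIdeal_of_le hI hhI ha ha1
    exact (starInvertible_iff_isUnit hs hA.isStarIdeal.1 haA).1 (hinv A hA.isStarIdeal hA hIA)
  · rintro ⟨hhom, hunit⟩
    refine ⟨(isHomog_iff hI hhI).2 hhom, fun A _ hA hIA ↦ ?_⟩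
    obtain ⟨hA0, a, haA⟩ := isFiniteTypeStarIdeal_iff.1 hA
    exact (starInvertible_iff_isUnit hs hA0 haA).2
      (hunit a ((le_iff_of_coe_eq hhI haA).2 hIA) (le_one_of_coe_eq haA))

theorem add_ne_one_of_fg_of_subset_MSet (hh : IsHomogElem h) (hI : I ≠ ⊥)
    (hhI : (h : FractionalIdeal D⁰ K) = I) (hA : A.FG) (hAI : (A : Set D) ⊆ s.MSet I)
    (haA : (a : FractionalIdeal D⁰ K) = s.closure A) : h + a ≠ 1 := by
  have hhI' : (h : FractionalIdeal D⁰ K) = s.closure I := by rw [← hhI, closure_coe]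
  induction A, hA using Submodule.fg_induction generalizing a with
  | singleton x =>
    rw [Ne, ← star_add_eq_one_iff hI hhI' haA, add_comm]
    exact hAI (Submodule.mem_span_singleton_self x)
  | sup A B hA hB ihA ihB =>
    obtain ⟨b, hb⟩ := exists_coe_eq_closure (s := s) hA
    obtain ⟨c, hc⟩ := exists_coe_eq_closure (s := s) hB
    have habc : a = b + c := by
      rw [← coe_inj, coe_add, hb, hc, closure_add_closure, haA, FractionalIdeal.coeIdeal_sup]
    rw [habc]
    exact hh.add_add_ne_one (ihA (Set.Subset.trans (le_sup_left (b := B)) hAI) hb)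
      (ihB (Set.Subset.trans (le_sup_right (a := A)) hAI) hc)

theorem add_ne_one_of_subset_MSet (hh : IsHomogElem h) (hI : I ≠ ⊥)
    (hhI : (h : FractionalIdeal D⁰ K) = I) (hJ : s.IsFiniteTypeStarIdeal J)
    (hJI : (J : Set D) ⊆ s.MSet I) (hkJ : (k : FractionalIdeal D⁰ K) = J) : h + k ≠ 1 := by
  obtain ⟨G, hG0, hG, hGJ⟩ := hJ
  have hG0' : (G : FractionalIdeal D⁰ K) ≠ 0 := FractionalIdeal.coeIdeal_ne_zero.2 hG0
  have hGle : G ≤ J := (FractionalIdeal.coeIdeal_le_coeIdeal K).1 (hGJ ▸ s.le_star G hG0')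
  exact add_ne_one_of_fg_of_subset_MSet hh hI hhI hG (Set.Subset.trans hGle hJI)
    (by rw [hkJ, ← hGJ, s.closure_of_ne_zero hG0'])

theorem exists_coeIdeal_eq_mul_and_eq_star_mul (hI : I ≠ ⊥) (hJ : J ≠ ⊥)
    (hhI : (h : FractionalIdeal D⁰ K) = I) (hkJ : (k : FractionalIdeal D⁰ K) = J) :
    ∃ L : Ideal D, L ≠ ⊥ ∧ ((h * k : s.FiniteTypeFractionalIdeal) : FractionalIdeal D⁰ K) = L ∧
      (L : FractionalIdeal D⁰ K) = s.star ((I * J : Ideal D) : FractionalIdeal D⁰ K) := by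
  have hIJ : ((I * J : Ideal D) : FractionalIdeal D⁰ K) ≠ 0 :=
    FractionalIdeal.coeIdeal_ne_zero.2 (mul_ne_zero hI hJ)
  obtain ⟨L, hL⟩ := exists_coeIdeal_eq (mul_le_one' (le_one_of_coe_eq hhI) (le_one_of_coe_eq hkJ))
  have hLstar : (L : FractionalIdeal D⁰ K) = s.star ((I * J : Ideal D) : FractionalIdeal D⁰ K) := by
    rw [hL, coe_mul, hhI, hkJ, ← FractionalIdeal.coeIdeal_mul, s.closure_of_ne_zero hIJ]
  refine ⟨L, ?_, hL.symm, hLstar⟩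
  rintro rfl
  exact hIJ (le_zero_iff.1 ((s.le_star _ hIJ).trans hLstar.ge))

end StarOperation

open StarOperation StarOperation.FiniteTypeFractionalIdeal in
theorem superHomog_comparable_and_mul_general {D K : Type*} [CommRing D] [IsDomain D] [Field K]
    [Algebra D K] [IsFractionRing D K] (s : StarOperation D K) (hs : s.FiniteCharacter)
    (I : Ideal D) (hI : s.IsSuperHomog I) (J : Ideal D) (hJ : s.IsHomog J)
    (hJI : (J : Set D) ⊆ s.MSet I) :
    ((I : FractionalIdeal D⁰ K) ≤ s.star (J : FractionalIdeal D⁰ K) ∨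
      (J : FractionalIdeal D⁰ K) ≤ s.star (I : FractionalIdeal D⁰ K)) ∧
    ∃ L : Ideal D,
      (L : FractionalIdeal D⁰ K) = s.star ((I * J : Ideal D) : FractionalIdeal D⁰ K) ∧
      s.IsHomog L ∧ (s.IsSuperHomog J → s.IsSuperHomog L) := by
  have ⟨_, hIstar, hIfin, _⟩ := hI.1
  have ⟨_, hJstar, hJfin, _⟩ := hJ
  obtain ⟨hI0, h, hhI⟩ := isFiniteTypeStarIdeal_iff.1 hIfin
  obtain ⟨hJ0, k, hkJ⟩ := isFiniteTypeStarIdeal_iff.1 hJfin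
  have hh : IsSuperHomogElem h := (isSuperHomog_iff hs hI0 hhI).1 hI
  have hk : IsHomogElem k := (isHomog_iff hJ0 hkJ).1 hJ
  have hhk : h + k ≠ 1 := add_ne_one_of_subset_MSet hh.toIsHomogElem hI0 hhI hJfin hJI hkJ
  constructor
  · rw [hIstar.2, hJstar.2, ← hhI, ← hkJ, coe_le_coe, coe_le_coe]
    exact hh.le_or_le hk hhk
  · obtain ⟨L, hL0, hhkL, hL⟩ := exists_coeIdeal_eq_mul_and_eq_star_mul hI0 hJ0 hhI hkJ
    exact ⟨L, hL, (isHomog_iff hL0 hhkL).2 (hh.toIsHomogElem.mul hk hhk), fun hJ' ↦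
      (isSuperHomog_iff hs hL0 hhkL).2 (hh.mul ((isSuperHomog_iff hs hJ0 hkJ).1 hJ') hhk)⟩

/-- Let `I` be `*`-super homogeneous with `M = M(I)`, and `J` a `*`-super
homogeneous ideal with `J ⊆ M`. Then (a) `I ⊆ J^*` or `J ⊆ I^*`, and (b) `(IJ)^*` is a
`*`-super homogeneous ideal. -/
theorem superHomog_comparable_and_mul {D K : Type*} [CommRing D] [IsDomain D] [Field K]
    [Algebra D K] [IsFractionRing D K] (s : StarOperation D K) (hs : s.FiniteCharacter)
    (I : Ideal D) (hI : s.IsSuperHomog I) (M : Ideal D) (hM : (M : Set D) = s.MSet I)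
    (J : Ideal D) (hJ : s.IsSuperHomog J) (hJM : J ≤ M) :
    ((I : FractionalIdeal D⁰ K) ≤ s.star (J : FractionalIdeal D⁰ K) ∨
      (J : FractionalIdeal D⁰ K) ≤ s.star (I : FractionalIdeal D⁰ K)) ∧
    ∃ L : Ideal D,
      (L : FractionalIdeal D⁰ K) = s.star ((I * J : Ideal D) : FractionalIdeal D⁰ K) ∧
      s.IsSuperHomog L := by
  obtain ⟨hcomp, L, hL, -, hLsuper⟩ :=
    superHomog_comparable_and_mul_general s hs I hI J hJ.1 (hM ▸ hJM)
  exact ⟨hcomp, L, hL, hLsuper hJ⟩
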